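/- Let n ≥ 1, β > n, and let φ be a doubling Young function satisfying C_β := sup_{t>0} (t^β/φ(t)) ∫_0^t φ(s) s^{-β-1} ds < ∞. Suppose a domain Ω ⊂ ℝⁿ satisfies: there exists C > 0 such that for every u ∈ Ẇ^{β,φ}(Ω) there is ũ with ũ = u almost everywhere and |ũ(x) − ũ(y)| ≤ C φ⁻¹(|x−y|^{β−n}) ‖u‖_{Ẇ^{β,φ}(Ω)} for all x, y ∈ Ω. Then Ω is Ahlfors n-regular. -/

import Mathlib

/-!
The imbedding is tested on cones. Fix `x ∈ Ω` and `r > 0`, and let `u` be the cone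
`max(0, 1 - |z - x|/r)`, which is `1/r`-Lipschitz with values in `[0, 1]` and vanishes off
`B(x, r)`. Since pairs of points off `B(x, r)` do not contribute, the double integral defining
the seminorm at level `λ = 1/τ` is at most
`2 |B(x, r) ∩ Ω| ∫ φ(min(1, |h|/r) τ) |h|^{-n-β} dh` (`fracIntegral_cone_le`). In polar coordinates
the part `|h| ≤ r` is controlled by `C_β` after rescaling and the part `|h| > r` is explicit, so
the integral is at most a constant times `φ(τ) r^{-β}` (`lintegral_kern_le`). With a suitable
constant `A`, the choice `φ(τ) = r^β / (A |B(x, r) ∩ Ω|)` therefore gives `‖u‖ ≤ 1/τ`.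

The representative provided by the imbedding is continuous, hence equal to `u` on the open set
`Ω`. If `y ∈ Ω` has `|x - y| = r`, then `u(x) - u(y) = 1`, so the imbedding yields
`τ ≤ C φ⁻¹(r^{β-n})`. Applying `φ` and the doubling condition, `r^β / (A |B(x, r) ∩ Ω|)` is at most
a constant times `r^{β-n}`, which is the volume bound (`volume_lower_bound`). For `r < 2 diam Ω`
such a `y` exists at distance `r/8`, because `Ω` is connected and is not contained in the closed
ball of radius `r/8` about `x`.
-/

open MeasureTheory Metric Set Filter
open scoped ENNReal NNReal Topology Classical

noncomputable section

/-- `φ` is a Young function: convex, continuous on `[0,∞)`, `φ(0)=0`, `φ(t)>0` for `t>0`. -/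
def IsYoung (φ : ℝ → ℝ) : Prop :=
  ContinuousOn φ (Set.Ici 0) ∧ ConvexOn ℝ (Set.Ici 0) φ ∧ φ 0 = 0 ∧ ∀ t > 0, 0 < φ t

/-- `φ` is doubling with constant `K > 1`: `φ(2t) ≤ K φ(t)` for all `t > 0`. -/
def IsDoubling (φ : ℝ → ℝ) (K : ℝ) : Prop :=
  1 < K ∧ ∀ t > 0, φ (2 * t) ≤ K * φ t

/-- The (generalized) inverse of a Young function. -/
def yInv (φ : ℝ → ℝ) (y : ℝ) : ℝ :=
  sInf {t : ℝ | 0 ≤ t ∧ y ≤ φ t}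

/-- `sup_{t>0} (t^β/φ(t)) ∫_0^t φ(s) s^{-β-1} ds ≤ M`. -/
def CbetaLE (β : ℝ) (φ : ℝ → ℝ) (M : ℝ) : Prop :=
  ∀ t > 0,
    ENNReal.ofReal (t ^ β / φ t) *
        (∫⁻ s in Set.Ioc (0 : ℝ) t, ENNReal.ofReal (φ s / s ^ (β + 1))) ≤
      ENNReal.ofReal M

/-- The condition `C_β := sup_{t>0} (t^β/φ(t)) ∫_0^t φ(s) s^{-β-1} ds < ∞`. -/
def CbetaFinite (β : ℝ) (φ : ℝ → ℝ) : Prop :=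
  ∃ M : ℝ, CbetaLE β φ M

/-- The double integral `∫_Ω ∫_Ω φ(|u(x)-u(y)|/λ) |x-y|^{-n-β} dx dy`. -/
def fracIntegral (n : ℕ) (β : ℝ) (φ : ℝ → ℝ) (Ω : Set (EuclideanSpace ℝ (Fin n)))
    (u : EuclideanSpace ℝ (Fin n) → ℝ) (lam : ℝ) : ℝ≥0∞ :=
  ∫⁻ x in Ω, ∫⁻ y in Ω,
    ENNReal.ofReal (φ (|u x - u y| / lam) / dist x y ^ ((n : ℝ) + β))

/-- The fractional Orlicz–Sobolev (Luxemburg-type) seminorm `‖u‖_{Ẇ^{β,φ}(Ω)}`,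
valued in `[0,∞]` (it is `∞` iff no admissible `λ` exists). -/
def fracNorm (n : ℕ) (β : ℝ) (φ : ℝ → ℝ) (Ω : Set (EuclideanSpace ℝ (Fin n)))
    (u : EuclideanSpace ℝ (Fin n) → ℝ) : ℝ≥0∞ :=
  sInf {lam : ℝ≥0∞ | 0 < lam ∧ lam ≠ ∞ ∧ fracIntegral n β φ Ω u lam.toReal ≤ 1}

/-- `u ∈ Ẇ^{β,φ}(Ω)` : locally integrable on `Ω` with finite seminorm. -/
def MemW (n : ℕ) (β : ℝ) (φ : ℝ → ℝ) (Ω : Set (EuclideanSpace ℝ (Fin n)))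
    (u : EuclideanSpace ℝ (Fin n) → ℝ) : Prop :=
  LocallyIntegrableOn u Ω ∧ fracNorm n β φ Ω u ≠ ∞

/-- The Orlicz (Luxemburg) norm `‖u‖_{L^ψ(Ω)}`, valued in `[0,∞]`. -/
def luxNorm (n : ℕ) (ψ : ℝ → ℝ) (Ω : Set (EuclideanSpace ℝ (Fin n)))
    (u : EuclideanSpace ℝ (Fin n) → ℝ) : ℝ≥0∞ :=
  sInf {lam : ℝ≥0∞ | 0 < lam ∧ lam ≠ ∞ ∧
    (∫⁻ x in Ω, ENNReal.ofReal (ψ (|u x| / lam.toReal))) ≤ 1}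

/-- `Ω` is Ahlfors `n`-regular: `|B(x,r) ∩ Ω| ≥ θ rⁿ` for all `x ∈ Ω`, `0 < r < 2 diam Ω`. -/
def AhlforsRegular (n : ℕ) (Ω : Set (EuclideanSpace ℝ (Fin n))) : Prop :=
  ∃ θ > (0 : ℝ), ∀ x ∈ Ω, ∀ r : ℝ, 0 < r → ENNReal.ofReal r < 2 * EMetric.diam Ω →
    ENNReal.ofReal (θ * r ^ n) ≤ volume (Metric.ball x r ∩ Ω)

/-- `Ω` is a `Ẇ^{β,φ}`-extension domain: there are `C > 0` and a linear operator `E`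
from `Ẇ^{β,φ}(Ω)` to `Ẇ^{β,φ}(ℝⁿ)` with `Eu = u` a.e. on `Ω` and
`‖Eu‖_{Ẇ^{β,φ}(ℝⁿ)} ≤ C ‖u‖_{Ẇ^{β,φ}(Ω)}`. -/
def IsExtensionDomain (n : ℕ) (β : ℝ) (φ : ℝ → ℝ)
    (Ω : Set (EuclideanSpace ℝ (Fin n))) : Prop :=
  ∃ C > (0 : ℝ), ∃ E : (EuclideanSpace ℝ (Fin n) → ℝ) → (EuclideanSpace ℝ (Fin n) → ℝ),
    (∀ u v, MemW n β φ Ω u → MemW n β φ Ω v → E (u + v) = E u + E v) ∧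
    (∀ (c : ℝ) (u), MemW n β φ Ω u → E (c • u) = c • E u) ∧
    (∀ u, MemW n β φ Ω u →
      MemW n β φ Set.univ (E u) ∧
      (∀ᵐ x ∂(volume.restrict Ω), E u x = u x) ∧
      fracNorm n β φ Set.univ (E u) ≤ ENNReal.ofReal C * fracNorm n β φ Ω u)

end

/-! ### Integration of radial functions -/

lemma lintegral_fun_norm_polar {E : Type*} [NormedAddCommGroup E] [NormedSpace ℝ E]
    [Nontrivial E] [FiniteDimensional ℝ E] [MeasurableSpace E] [BorelSpace E]
    (μ : Measure E) [μ.IsAddHaarMeasure] {f : ℝ → ℝ≥0∞} (hf : Measurable f) :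
    ∫⁻ x, f ‖x‖ ∂μ = μ.toSphere univ *
      ∫⁻ t in Ioi (0 : ℝ), ENNReal.ofReal (t ^ (Module.finrank ℝ E - 1)) * f t := by
  have h0 : ∫⁻ x, f ‖x‖ ∂μ = ∫⁻ x : ({(0 : E)}ᶜ : Set E), f ‖x.1‖ ∂(μ.comap (↑)) := by
    rw [lintegral_subtype_comap (measurableSet_singleton _).compl (fun x : E => f ‖x‖),
      restrict_compl_singleton]
  have hpre := (μ.measurePreserving_homeomorphUnitSphereProd).lintegral_comp
    (f := fun p : sphere (0 : E) 1 × Ioi (0 : ℝ) => f p.2.1) (by fun_prop)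
  simp only [homeomorphUnitSphereProd_apply_snd_coe] at hpre
  rw [h0, hpre, lintegral_prod _ (by fun_prop)]
  simp only [lintegral_const]
  rw [mul_comm, Measure.volumeIoiPow,
    lintegral_withDensity_eq_lintegral_mul _ (by fun_prop) (by fun_prop)]
  congr 1
  simp only [Pi.mul_apply]
  exact lintegral_subtype_comap (measurableSet_Ioi (a := (0:ℝ)))
    (fun t : ℝ => ENNReal.ofReal (t ^ (Module.finrank ℝ E - 1)) * f t)

/-! ### Young functions -/

lemma IsYoung.map_mul_le {φ : ℝ → ℝ} (hφ : IsYoung φ) {s t : ℝ} (hs0 : 0 ≤ s) (hs1 : s ≤ 1)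
    (ht : 0 ≤ t) : φ (s * t) ≤ s * φ t := by
  have h := hφ.2.1.2 (mem_Ici.2 le_rfl) (mem_Ici.2 ht) (sub_nonneg.2 hs1) hs0
    (sub_add_cancel 1 s)
  simpa [hφ.2.2.1] using h

lemma IsYoung.strictMonoOn {φ : ℝ → ℝ} (hφ : IsYoung φ) : StrictMonoOn φ (Ici 0) := by
  intro a ha b hb hab
  have hb0 : 0 < b := lt_of_le_of_lt ha hab
  have h1 : a / b < 1 := (div_lt_one hb0).2 hab
  have h := hφ.map_mul_le (div_nonneg ha hb0.le) h1.le hb0.le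
  rw [div_mul_cancel₀ _ hb0.ne'] at h
  nlinarith [hφ.2.2.2 b hb0]

lemma IsYoung.monotoneOn {φ : ℝ → ℝ} (hφ : IsYoung φ) : MonotoneOn φ (Ici 0) :=
  hφ.strictMonoOn.monotoneOn

lemma IsYoung.nonneg {φ : ℝ → ℝ} (hφ : IsYoung φ) {t : ℝ} (ht : 0 ≤ t) : 0 ≤ φ t := by
  have := hφ.monotoneOn (mem_Ici.2 le_rfl) (mem_Ici.2 ht) ht
  rwa [hφ.2.2.1] at this

/-- A Young function takes every positive value: convexity and `φ 0 = 0` force `φ t ≥ t * φ 1`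
for `t ≥ 1`, so the intermediate value theorem applies. -/
lemma IsYoung.exists_eq {φ : ℝ → ℝ} (hφ : IsYoung φ) {y : ℝ} (hy : 0 < y) :
    ∃ t > 0, φ t = y := by
  have h1 := hφ.2.2.2 1 one_pos
  set b := 1 + y / φ 1 with hb
  have hb1 : 1 ≤ b := by have : 0 ≤ y / φ 1 := by positivity
                         linarith
  have hb0 : 0 < b := by linarith
  have h := hφ.map_mul_le (s := 1 / b) (by positivity) ((div_le_one hb0).2 hb1) hb0.le
  rw [div_mul_cancel₀ _ hb0.ne'] at h
  have hle : y ≤ φ b := by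
    rw [one_div, inv_mul_eq_div, le_div_iff₀ hb0] at h
    have : φ 1 * b = φ 1 + y := by rw [hb]; field_simp
    linarith
  obtain ⟨t, ht, hte⟩ := intermediate_value_Icc hb0.le
    (hφ.1.mono (fun _ hx => hx.1)) ⟨by rw [hφ.2.2.1]; exact hy.le, hle⟩
  refine ⟨t, lt_of_le_of_ne ht.1 ?_, hte⟩
  rintro rfl
  rw [hφ.2.2.1] at hte
  linarith

lemma yInv_le {φ : ℝ → ℝ} {y t : ℝ} (ht : 0 ≤ t) (h : y ≤ φ t) : yInv φ y ≤ t :=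
  csInf_le ⟨0, fun _ hx => hx.1⟩ ⟨ht, h⟩

lemma yInv_nonneg (φ : ℝ → ℝ) (y : ℝ) : 0 ≤ yInv φ y :=
  Real.sInf_nonneg fun _ hx => hx.1

lemma IsDoubling.pow_le {φ : ℝ → ℝ} {K : ℝ} (h : IsDoubling φ K) (k : ℕ) {t : ℝ} (ht : 0 < t) :
    φ (2 ^ k * t) ≤ K ^ k * φ t := by
  induction k with
  | zero => simp
  | succ k ih =>
    have h2 := h.2 (2 ^ k * t) (by positivity)
    have hK : 0 < K := by linarith [h.1]
    calc φ (2 ^ (k + 1) * t) = φ (2 * (2 ^ k * t)) := by ring_nf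
      _ ≤ K * φ (2 ^ k * t) := h2
      _ ≤ K * (K ^ k * φ t) := by gcongr
      _ = _ := by ring

/-! ### The radial majorant and its integral -/

/-- The radial majorant `φ(min(1, |t|/r) τ) / |t|^{n+β}` of the integrand of the seminorm of a
`1/r`-Lipschitz function with values in `[0,1]`, where `τ = 1/λ`. -/
noncomputable def kern (n : ℕ) (β : ℝ) (φ : ℝ → ℝ) (r τ t : ℝ) : ℝ≥0∞ :=
  ENNReal.ofReal (φ (min 1 (|t| / r) * τ) / |t| ^ ((n : ℝ) + β))

lemma measurable_kern (n : ℕ) (β : ℝ) {φ : ℝ → ℝ} (hφ : IsYoung φ) {r τ : ℝ} (hr : 0 < r)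
    (hτ : 0 < τ) : Measurable (kern n β φ r τ) := by
  have hc : Continuous fun t : ℝ => φ (min 1 (|t| / r) * τ) :=
    hφ.1.comp_continuous (by fun_prop) fun t => mem_Ici.2 (by positivity)
  have := hc.measurable
  exact (this.div (by fun_prop)).ennreal_ofReal

/-- The part `t ≤ r` of the radial integral; the substitution `s = t τ / r` turns it into the
integral defining `C_β`. -/
lemma lintegral_near {β : ℝ} {φ : ℝ → ℝ} (hφ : IsYoung φ) {M : ℝ} (hM : CbetaLE β φ M)
    {r τ : ℝ} (hr : 0 < r) (hτ : 0 < τ) :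
    ∫⁻ t in Ioc 0 r, ENNReal.ofReal (φ (t / r * τ) / t ^ (β + 1)) ≤
      ENNReal.ofReal (φ τ / r ^ β) * ENNReal.ofReal M := by
  have ha : 0 < τ / r := by positivity
  have himg : (fun t : ℝ => τ / r * t) '' Ioc 0 r = Ioc 0 τ := by
    rw [image_mul_left_Ioc ha]; simp [div_mul_cancel₀ _ hr.ne']
  have hcv := lintegral_image_eq_lintegral_abs_deriv_mul (s := Ioc 0 r)
    (f := fun t : ℝ => τ / r * t) (f' := fun _ => τ / r) measurableSet_Ioc
    (fun t _ => by simpa using ((hasDerivAt_id t).const_mul (τ / r)).hasDerivWithinAt)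
    (fun a _ b _ hab => mul_left_cancel₀ ha.ne' hab)
    (fun s => ENNReal.ofReal (φ s / s ^ (β + 1)))
  rw [himg] at hcv
  have hφτ := hφ.2.2.2 τ hτ
  have h1 : ∫⁻ t in Ioc 0 r, ENNReal.ofReal (φ (t / r * τ) / t ^ (β + 1)) =
      ENNReal.ofReal ((τ / r) ^ β) *
        ∫⁻ s in Ioc 0 τ, ENNReal.ofReal (φ s / s ^ (β + 1)) := by
    rw [hcv, ← lintegral_const_mul' _ _ ENNReal.ofReal_ne_top]
    refine setLIntegral_congr_fun measurableSet_Ioc fun t ht => ?_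
    have ht0 : 0 < t := ht.1
    rw [abs_of_pos ha, ← ENNReal.ofReal_mul (by positivity), ← ENNReal.ofReal_mul (by positivity),
      Real.mul_rpow ha.le ht0.le, Real.rpow_add_one ha.ne']
    congr 1
    rw [show τ / r * t = t / r * τ by ring]
    have : 0 < (τ / r) ^ β := by positivity
    field_simp
  rw [h1]
  calc _ = ENNReal.ofReal (φ τ / r ^ β) * (ENNReal.ofReal (τ ^ β / φ τ) *
        ∫⁻ s in Ioc 0 τ, ENNReal.ofReal (φ s / s ^ (β + 1))) := by
        rw [← mul_assoc, ← ENNReal.ofReal_mul (by positivity), Real.div_rpow hτ.le hr.le]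
        congr 2
        field_simp
    _ ≤ _ := by gcongr; exact hM τ hτ

lemma lintegral_far {β : ℝ} (hβ : 0 < β) {c r : ℝ} (hc : 0 ≤ c) (hr : 0 < r) :
    ∫⁻ t in Ioi r, ENNReal.ofReal (c / t ^ (β + 1)) =
      ENNReal.ofReal (c / r ^ β) * ENNReal.ofReal (1 / β) := by
  have h : ∫⁻ t in Ioi r, ENNReal.ofReal (t ^ (-(β + 1))) =
      ENNReal.ofReal (1 / (β * r ^ β)) := by
    rw [← ofReal_integral_eq_lintegral_ofReal (integrableOn_Ioi_rpow_of_lt (by linarith) hr),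
      integral_Ioi_rpow_of_lt (by linarith) hr]
    · congr 1
      rw [show -(β + 1) + 1 = -β by ring, Real.rpow_neg hr.le]
      have : 0 < r ^ β := by positivity
      field_simp
    · filter_upwards [ae_restrict_mem measurableSet_Ioi] with t ht
      have : 0 < t := hr.trans ht
      simp only [Pi.zero_apply]; positivity
  have h2 : ∫⁻ t in Ioi r, ENNReal.ofReal (c / t ^ (β + 1)) =
      ENNReal.ofReal c * ∫⁻ t in Ioi r, ENNReal.ofReal (t ^ (-(β + 1))) := by
    rw [← lintegral_const_mul' _ _ ENNReal.ofReal_ne_top]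
    refine setLIntegral_congr_fun measurableSet_Ioi fun t ht => ?_
    have : 0 < t := hr.trans ht
    rw [← ENNReal.ofReal_mul hc, Real.rpow_neg this.le, div_eq_mul_inv]
  rw [h2, h, ← ENNReal.ofReal_mul hc, ← ENNReal.ofReal_mul (by positivity)]
  congr 1
  field_simp

/-- The integral of the radial majorant over the whole space is at most a constant times
`φ τ / r ^ β`, the constant depending on `n`, `β` and `C_β` only. -/
lemma lintegral_kern_le {n : ℕ} (hn : 1 ≤ n) {β : ℝ} (hβ : 0 < β) {φ : ℝ → ℝ} (hφ : IsYoung φ)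
    {M : ℝ} (hM : CbetaLE β φ M) {r τ : ℝ} (hr : 0 < r) (hτ : 0 < τ) :
    ∫⁻ h : EuclideanSpace ℝ (Fin n), kern n β φ r τ ‖h‖ ≤
      (volume : Measure (EuclideanSpace ℝ (Fin n))).toSphere univ *
        (ENNReal.ofReal M + ENNReal.ofReal (1 / β)) * ENNReal.ofReal (φ τ / r ^ β) := by
  have : Nonempty (Fin n) := ⟨⟨0, hn⟩⟩
  rw [lintegral_fun_norm_polar _ (measurable_kern n β hφ hr hτ), finrank_euclideanSpace_fin,
    mul_assoc]
  gcongr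
  have hpow : ∀ t : ℝ, 0 < t → ∀ c : ℝ, ENNReal.ofReal (t ^ (n - 1)) *
      ENNReal.ofReal (c / t ^ ((n : ℝ) + β)) = ENNReal.ofReal (c / t ^ (β + 1)) := by
    intro t ht c
    rw [← ENNReal.ofReal_mul (by positivity)]
    congr 1
    have : t ^ ((n : ℝ) + β) = t ^ (n - 1) * t ^ (β + 1) := by
      rw [← Real.rpow_natCast, ← Real.rpow_add ht, Nat.cast_sub hn]
      congr 1; push_cast; ring
    rw [this]
    have : 0 < t ^ (β + 1) := by positivity
    field_simp
  rw [← Ioc_union_Ioi_eq_Ioi hr.le, lintegral_union measurableSet_Ioi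
    (by rw [Set.disjoint_left]; intro t h1 h2; exact absurd h1.2 (not_le.2 h2)), add_mul,
    mul_comm (ENNReal.ofReal M), mul_comm (ENNReal.ofReal (1 / β))]
  refine add_le_add (le_trans (le_of_eq ?_) (lintegral_near hφ hM hr hτ))
    (le_of_eq (Eq.trans ?_ (lintegral_far hβ (hφ.nonneg hτ.le) hr)))
  · refine setLIntegral_congr_fun measurableSet_Ioc fun t ht => ?_
    simp only [kern]
    rw [abs_of_pos ht.1, hpow t ht.1, min_eq_right ((div_le_one hr).2 ht.2)]
  · refine setLIntegral_congr_fun measurableSet_Ioi fun t ht => ?_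
    have ht0 : 0 < t := hr.trans ht
    simp only [kern]
    rw [abs_of_pos ht0, hpow t ht0, min_eq_left ((one_le_div hr).2 (le_of_lt ht)), one_mul]

/-! ### Cone functions -/

/-- The cone `z ↦ max(0, 1 - |z - x|/r)`, equal to `1` at `x` and to `0` off `B(x, r)`. -/
noncomputable def cone {n : ℕ} (x : EuclideanSpace ℝ (Fin n)) (r : ℝ)
    (z : EuclideanSpace ℝ (Fin n)) : ℝ :=
  max 0 (1 - dist z x / r)

lemma continuous_cone {n : ℕ} (x : EuclideanSpace ℝ (Fin n)) (r : ℝ) :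
    Continuous (cone x r) := by
  unfold cone
  fun_prop

lemma cone_eq_zero {n : ℕ} {x z : EuclideanSpace ℝ (Fin n)} {r : ℝ} (hr : 0 < r)
    (h : z ∉ ball x r) : cone x r z = 0 := by
  rw [mem_ball, not_lt] at h
  exact max_eq_left (by rw [sub_nonpos]; exact (one_le_div hr).2 h)

lemma abs_cone_sub_le {n : ℕ} (x z w : EuclideanSpace ℝ (Fin n)) {r : ℝ} (hr : 0 < r) :
    |cone x r z - cone x r w| ≤ min 1 (dist z w / r) := by
  have hb : ∀ y, 0 ≤ cone x r y ∧ cone x r y ≤ 1 := fun y =>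
    ⟨le_max_left _ _, max_le zero_le_one (by
      have : 0 ≤ dist y x / r := by positivity
      linarith)⟩
  refine le_min ?_ ?_
  · rw [abs_le]
    constructor <;> linarith [(hb z).1, (hb z).2, (hb w).1, (hb w).2]
  · have h : |cone x r z - cone x r w| ≤ |(1 - dist z x / r) - (1 - dist w x / r)| := by
      simpa [cone] using abs_max_sub_max_le_max 0 (1 - dist z x / r) 0 (1 - dist w x / r)
    refine h.trans ?_
    rw [show (1 - dist z x / r) - (1 - dist w x / r) = -((dist z x - dist w x) / r) by ring,
      abs_neg, abs_div, abs_of_pos hr]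
    gcongr
    exact abs_dist_sub_le z w x

/-- The modular of the cone: `z, w` both off `B(x, r)` contribute nothing, so the double integral
is at most twice `|B(x, r) ∩ Ω|` times the integral of the radial majorant. -/
lemma fracIntegral_cone_le {n : ℕ} {β : ℝ} {φ : ℝ → ℝ} (hφ : IsYoung φ)
    {Ω : Set (EuclideanSpace ℝ (Fin n))}
    (x : EuclideanSpace ℝ (Fin n)) {r τ : ℝ} (hr : 0 < r) (hτ : 0 < τ) :
    fracIntegral n β φ Ω (cone x r) τ⁻¹ ≤
      2 * (volume (ball x r ∩ Ω) *
        ∫⁻ h : EuclideanSpace ℝ (Fin n), kern n β φ r τ ‖h‖) := by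
  set k := kern n β φ r τ with hk
  have hkm : Measurable k := measurable_kern n β hφ hr hτ
  set I := ∫⁻ h : EuclideanSpace ℝ (Fin n), k ‖h‖ with hI
  let χ : EuclideanSpace ℝ (Fin n) → ℝ≥0∞ := (ball x r).indicator 1
  have hχ : Measurable χ := measurable_one.indicator measurableSet_ball
  have hpt : ∀ z w, ENNReal.ofReal (φ (|cone x r z - cone x r w| / τ⁻¹) /
      dist z w ^ ((n : ℝ) + β)) ≤ χ z * k ‖z - w‖ + χ w * k ‖z - w‖ := by
    intro z w
    by_cases hzw : z ∉ ball x r ∧ w ∉ ball x r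
    · rw [cone_eq_zero hr hzw.1, cone_eq_zero hr hzw.2]
      simp [hφ.2.2.1]
    · have h1 : ENNReal.ofReal (φ (|cone x r z - cone x r w| / τ⁻¹) /
          dist z w ^ ((n : ℝ) + β)) ≤ k ‖z - w‖ := by
        simp only [hk, kern, abs_dist, ← dist_eq_norm, div_inv_eq_mul]
        refine ENNReal.ofReal_le_ofReal (div_le_div_of_nonneg_right ?_ (by positivity))
        refine hφ.monotoneOn (mem_Ici.2 (by positivity)) (mem_Ici.2 (by positivity)) ?_
        gcongr
        exact abs_cone_sub_le x z w hr
      refine h1.trans ?_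
      rw [not_and_or, not_not, not_not] at hzw
      rcases hzw with h | h
      · exact le_add_right (by simp [χ, h])
      · exact le_add_left (by simp [χ, h])
  have hχI : ∫⁻ z in Ω, χ z * I = volume (ball x r ∩ Ω) * I := by
    rw [lintegral_mul_const _ hχ, lintegral_indicator_one measurableSet_ball,
      Measure.restrict_apply measurableSet_ball]
  have hshift : ∀ z : EuclideanSpace ℝ (Fin n), ∫⁻ w in Ω, k ‖z - w‖ ≤ I := fun z =>
    (setLIntegral_le_lintegral _ _).trans
      (lintegral_sub_left_eq_self (fun h : EuclideanSpace ℝ (Fin n) => k ‖h‖) z).le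
  have hA : ∫⁻ z in Ω, ∫⁻ w in Ω, χ z * k ‖z - w‖ ≤ volume (ball x r ∩ Ω) * I := by
    rw [← hχI]
    refine lintegral_mono fun z => ?_
    rw [lintegral_const_mul _ (by fun_prop)]
    gcongr
    exact hshift z
  have hB : ∫⁻ z in Ω, ∫⁻ w in Ω, χ w * k ‖z - w‖ ≤ volume (ball x r ∩ Ω) * I := by
    rw [lintegral_lintegral_swap (by fun_prop)]
    simpa only [norm_sub_rev] using hA
  calc fracIntegral n β φ Ω (cone x r) τ⁻¹
      ≤ ∫⁻ z in Ω, ∫⁻ w in Ω, (χ z * k ‖z - w‖ + χ w * k ‖z - w‖) :=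
        lintegral_mono fun z => lintegral_mono fun w => hpt z w
    _ = (∫⁻ z in Ω, ∫⁻ w in Ω, χ z * k ‖z - w‖) + ∫⁻ z in Ω, ∫⁻ w in Ω, χ w * k ‖z - w‖ := by
        rw [← lintegral_add_left (by fun_prop)]
        refine lintegral_congr fun z => ?_
        rw [lintegral_add_left (by fun_prop)]
    _ ≤ _ := by rw [two_mul]; exact add_le_add hA hB

/-! ### From the imbedding to the volume bound -/

/-- A modulus of continuity of the form `c * φ⁻¹(|x - y|^γ)`, `γ > 0`, gives continuity. -/
lemma continuousOn_of_modulus {n : ℕ} {φ : ℝ → ℝ} (hφ : IsYoung φ) {γ : ℝ} (hγ : 0 < γ)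
    {Ω : Set (EuclideanSpace ℝ (Fin n))} {v : EuclideanSpace ℝ (Fin n) → ℝ} {c N : ℝ}
    (hc : 0 ≤ c) (hN : 0 ≤ N)
    (h : ∀ x ∈ Ω, ∀ y ∈ Ω, |v x - v y| ≤ c * yInv φ (dist x y ^ γ) * N) :
    ContinuousOn v Ω := by
  rw [Metric.continuousOn_iff]
  intro b hb ε hε
  set s := ε / (c * N + 1) with hs
  have hs0 : 0 < s := by positivity
  have hφs := hφ.2.2.2 s hs0
  refine ⟨φ s ^ (γ⁻¹), by positivity, fun a ha hab => ?_⟩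
  have h1 : dist a b ^ γ ≤ φ s := by
    calc dist a b ^ γ ≤ (φ s ^ (γ⁻¹)) ^ γ := by gcongr
      _ = φ s := Real.rpow_inv_rpow hφs.le hγ.ne'
  rw [Real.dist_eq]
  calc |v a - v b| ≤ c * yInv φ (dist a b ^ γ) * N := h a ha b hb
    _ ≤ c * s * N := by gcongr; exact yInv_le hs0.le h1
    _ < s * (c * N + 1) := by linarith
    _ = ε := by rw [hs]; field_simp

/-- The regularity estimate at a radius `r` realised as a distance `|x - y|` within `Ω`. -/
lemma volume_lower_bound {n : ℕ} {β : ℝ} (hβ : (n : ℝ) < β)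
    {φ : ℝ → ℝ} (hφ : IsYoung φ) {K : ℝ} (hK : IsDoubling φ K) {k : ℕ}
    {Ω : Set (EuclideanSpace ℝ (Fin n))} (hΩ : IsOpen Ω) {C A : ℝ} (hC : 0 < C) (hCk : C ≤ 2 ^ k)
    (hA : 0 < A)
    (hmod : ∀ x : EuclideanSpace ℝ (Fin n), ∀ r > 0, ∀ τ > 0,
      fracIntegral n β φ Ω (cone x r) τ⁻¹ ≤
        volume (ball x r ∩ Ω) * ENNReal.ofReal (A * (φ τ / r ^ β)))
    (hI : ∀ u : EuclideanSpace ℝ (Fin n) → ℝ, MemW n β φ Ω u →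
      ∃ v : EuclideanSpace ℝ (Fin n) → ℝ,
        (∀ᵐ x ∂(volume.restrict Ω), v x = u x) ∧
        ∀ x ∈ Ω, ∀ y ∈ Ω,
          |v x - v y| ≤
            C * yInv φ (dist x y ^ (β - (n : ℝ))) * (fracNorm n β φ Ω u).toReal)
    {x y : EuclideanSpace ℝ (Fin n)} (hx : x ∈ Ω) (hy : y ∈ Ω) {r : ℝ} (hr : 0 < r)
    (hxy : dist x y = r) :
    ENNReal.ofReal ((A * K ^ k)⁻¹ * r ^ n) ≤ volume (ball x r ∩ Ω) := by
  have hK0 : 0 < K := by linarith [hK.1]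
  have hfin : volume (ball x r ∩ Ω) ≠ ∞ :=
    measure_ne_top_of_subset inter_subset_left measure_ball_lt_top.ne
  have hpos : 0 < volume (ball x r ∩ Ω) :=
    (isOpen_ball.inter hΩ).measure_pos _ ⟨x, mem_ball_self hr, hx⟩
  set m := (volume (ball x r ∩ Ω)).toReal with hm
  have hm0 : 0 < m := ENNReal.toReal_pos hpos.ne' hfin
  have hmv : volume (ball x r ∩ Ω) = ENNReal.ofReal m := (ENNReal.ofReal_toReal hfin).symm
  -- `τ` is chosen so that the modular of the cone at level `λ = 1/τ` is at most `1`.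
  obtain ⟨τ, hτ, hτe⟩ := hφ.exists_eq (y := r ^ β / (A * m)) (by positivity)
  have hint : fracIntegral n β φ Ω (cone x r) τ⁻¹ ≤ 1 := by
    refine (hmod x r hr τ hτ).trans ?_
    rw [hmv, ← ENNReal.ofReal_mul hm0.le, hτe, ENNReal.ofReal_le_one]
    have : 0 < r ^ β := by positivity
    exact le_of_eq (by field_simp)
  have hnorm : fracNorm n β φ Ω (cone x r) ≤ ENNReal.ofReal τ⁻¹ :=
    sInf_le ⟨by simpa using hτ, ENNReal.ofReal_ne_top, by
      rwa [ENNReal.toReal_ofReal (by positivity)]⟩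
  have hnormR : (fracNorm n β φ Ω (cone x r)).toReal ≤ τ⁻¹ :=
    ENNReal.toReal_le_of_le_ofReal (by positivity) hnorm
  obtain ⟨v, hvu, hv⟩ := hI (cone x r)
    ⟨(continuous_cone x r).locallyIntegrable.locallyIntegrableOn _,
      ne_top_of_le_ne_top ENNReal.ofReal_ne_top hnorm⟩
  have hvc : ContinuousOn v Ω :=
    continuousOn_of_modulus hφ (sub_pos.2 hβ) hC.le ENNReal.toReal_nonneg hv
  have heq : EqOn v (cone x r) Ω :=
    Measure.eqOn_open_of_ae_eq hvu hΩ hvc (continuous_cone x r).continuousOn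
  have h1 := hv x hx y hy
  have hcx : cone x r x = 1 := by simp [cone]
  have hcy : cone x r y = 0 := cone_eq_zero hr (by simp [dist_comm y x, hxy])
  rw [heq hx, heq hy, hcx, hcy, hxy, sub_zero, abs_one] at h1
  obtain ⟨s, hs, hse⟩ := hφ.exists_eq (y := r ^ (β - (n : ℝ))) (by positivity)
  have h2 : 1 ≤ C * s * τ⁻¹ := h1.trans (by
    have := yInv_le hs.le hse.ge
    have := yInv_nonneg φ (r ^ (β - (n : ℝ)))
    gcongr)
  have h3 : τ ≤ 2 ^ k * s := by
    rw [← div_eq_mul_inv, one_le_div hτ] at h2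
    exact h2.trans (by gcongr)
  have h4 : r ^ β / (A * m) ≤ K ^ k * r ^ (β - (n : ℝ)) := by
    rw [← hτe, ← hse]
    exact (hφ.monotoneOn (mem_Ici.2 hτ.le) (mem_Ici.2 (by positivity)) h3).trans (hK.pow_le k hs)
  rw [hmv]
  refine ENNReal.ofReal_le_ofReal ?_
  rw [Real.rpow_sub hr, Real.rpow_natCast] at h4
  have hrb : 0 < r ^ β := by positivity
  have hrn : 0 < r ^ n := by positivity
  rw [div_le_iff₀ (by positivity)] at h4
  have h5 : r ^ β * r ^ n ≤ r ^ β * (K ^ k * A * m) := by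
    calc r ^ β * r ^ n ≤ (K ^ k * (r ^ β / r ^ n) * (A * m)) * r ^ n := by gcongr
      _ = _ := by field_simp
  have h6 := le_of_mul_le_mul_left h5 hrb
  rw [inv_mul_le_iff₀ (by positivity)]
  linarith
/-- the Hölder-type imbedding (case `β > n`) implies Ahlfors `n`-regularity. -/
theorem imbedding_high_implies_ahlfors
    (n : ℕ) (hn : 1 ≤ n) (β : ℝ) (hβ : (n : ℝ) < β)
    (φ : ℝ → ℝ) (hφ : IsYoung φ) (hdbl : ∃ K : ℝ, IsDoubling φ K)
    (hCβ : CbetaFinite β φ)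
    (Ω : Set (EuclideanSpace ℝ (Fin n))) (hΩopen : IsOpen Ω) (hΩconn : IsConnected Ω)
    (hI : ∃ C > (0 : ℝ), ∀ u : EuclideanSpace ℝ (Fin n) → ℝ, MemW n β φ Ω u →
      ∃ v : EuclideanSpace ℝ (Fin n) → ℝ,
        (∀ᵐ x ∂(volume.restrict Ω), v x = u x) ∧
        ∀ x ∈ Ω, ∀ y ∈ Ω,
          |v x - v y| ≤
            C * yInv φ (dist x y ^ (β - (n : ℝ))) * (fracNorm n β φ Ω u).toReal) :
    AhlforsRegular n Ω := by
  obtain ⟨C, hC, hI⟩ := hI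
  obtain ⟨K, hK⟩ := hdbl
  obtain ⟨M, hM⟩ := hCβ
  obtain ⟨k, hk⟩ := pow_unbounded_of_one_lt C one_lt_two
  have hβ0 : 0 < β := lt_of_le_of_lt (Nat.cast_nonneg n) hβ
  have hK0 : 0 < K := by linarith [hK.1]
  set A₀ : ℝ≥0∞ := 2 * ((volume : Measure (EuclideanSpace ℝ (Fin n))).toSphere univ *
        (ENNReal.ofReal M + ENNReal.ofReal (1 / β))) with hA₀
  have hA₀fin : A₀ ≠ ∞ := by
    have : (volume : Measure (EuclideanSpace ℝ (Fin n))).toSphere univ ≠ ∞ := measure_ne_top _ _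
    finiteness
  set A : ℝ := A₀.toReal + 1 with hA
  have hApos : 0 < A := by positivity
  have hmod : ∀ x : EuclideanSpace ℝ (Fin n), ∀ r > 0, ∀ τ > 0,
      fracIntegral n β φ Ω (cone x r) τ⁻¹ ≤
        volume (ball x r ∩ Ω) * ENNReal.ofReal (A * (φ τ / r ^ β)) := by
    intro x r hr τ hτ
    refine (fracIntegral_cone_le hφ x hr hτ).trans ?_
    have hle : A₀ ≤ ENNReal.ofReal A := by
      rw [← ENNReal.ofReal_toReal hA₀fin]
      exact ENNReal.ofReal_le_ofReal (by linarith)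
    calc _ ≤ 2 * (volume (ball x r ∩ Ω) *
          ((volume : Measure (EuclideanSpace ℝ (Fin n))).toSphere univ *
          (ENNReal.ofReal M + ENNReal.ofReal (1 / β)) * ENNReal.ofReal (φ τ / r ^ β))) := by
          gcongr
          exact lintegral_kern_le hn hβ0 hφ hM hr hτ
      _ = volume (ball x r ∩ Ω) * (A₀ * ENNReal.ofReal (φ τ / r ^ β)) := by
          rw [hA₀]; ring
      _ ≤ _ := by
          rw [ENNReal.ofReal_mul hApos.le]
          gcongr
  refine ⟨(A * K ^ k)⁻¹ * (1 / 8) ^ n, by positivity, fun x hx r hr hrd => ?_⟩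
  -- Radii up to `2 diam Ω` are reduced to `r / 8`, which is realised as a distance from `x`.
  have hr8 : 0 < r / 8 := by positivity
  obtain ⟨y₀, hy₀, hfar⟩ : ∃ y ∈ Ω, r / 8 < dist x y := by
    by_contra! hcon
    have hd : Metric.ediam Ω ≤ ENNReal.ofReal (r / 4) := by
      refine Metric.ediam_le fun a ha b hb => ?_
      rw [edist_dist]
      refine ENNReal.ofReal_le_ofReal ?_
      linarith [dist_triangle_left a b x, hcon a ha, hcon b hb]
    have h2 : ENNReal.ofReal r < ENNReal.ofReal (r / 2) := by
      refine hrd.trans_le ?_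
      calc 2 * EMetric.diam Ω ≤ ENNReal.ofReal 2 * ENNReal.ofReal (r / 4) := by
            rw [ENNReal.ofReal_ofNat]
            exact mul_le_mul_right hd 2
        _ = ENNReal.ofReal (r / 2) := by
            rw [← ENNReal.ofReal_mul (by norm_num)]
            congr 1; ring
    rw [ENNReal.ofReal_lt_ofReal_iff (by positivity)] at h2
    linarith
  obtain ⟨y, hy, hxy⟩ : ∃ y ∈ Ω, dist x y = r / 8 :=
    hΩconn.isPreconnected.intermediate_value hx hy₀
      (f := fun y => dist x y) (by fun_prop) ⟨by simpa using hr8.le, hfar.le⟩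
  calc ENNReal.ofReal ((A * K ^ k)⁻¹ * (1 / 8) ^ n * r ^ n)
      = ENNReal.ofReal ((A * K ^ k)⁻¹ * (r / 8) ^ n) := by
        congr 1; rw [mul_assoc, ← mul_pow]; ring
    _ ≤ volume (ball x (r / 8) ∩ Ω) :=
        volume_lower_bound hβ hφ hK hΩopen hC hk.le hApos hmod hI hx hy hr8 hxy
    _ ≤ volume (ball x r ∩ Ω) := by gcongr; linarith
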